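/- arXiv:0706.0272 — 2 statements merged into one kernel-verified Lean document; each statement's English description precedes it below -/
import Mathlib

section
/- Let d ≥ 2 be an integer, I ≥ 1, and let N_1, …, N_I ≥ 2 be pairwise coprime integers; for each i let A_i ∈ ℤ[X] be a monic polynomial of degree a_i with 1 ≤ a_i ≤ d. Suppose P and P' are both irreducible polynomials in ℤ[X] of degree d with naive height at most H ≥ 1 such that for every i, both P mod N_i and P' mod N_i are multiples of A_i mod N_i in (ℤ/N_iℤ)[X]. If Π_{i=1}^{I} N_i^{a_i} > (2d)!^{d+1} · H^{d(d+1)} · 2^{d²(d+1)/4}, then P' = P or P' = −P; that is, P is unique up to sign among irreducible degree-d integer polynomials of naive height at most H satisfying all the congruence conditions. -/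
/-!
If two irreducible polynomials have resultant `0`, they are associated, so it suffices to show that
`Res(P, P')` is too divisible to be nonzero. It is the determinant of the Sylvester matrix, whose
columns are the polynomials `P Xʲ` and `P' Xʲ`. Modulo `N` all of these are multiples of the monic
polynomial `A` of degree `a`, so they lie in a lattice of index `N ^ a`: in the basis
`1, X, …, X ^ (a - 1), A, A X, A X², …` the first `a` coordinates are the coefficients of the
remainders modulo `A`, hence are divisible by `N`. Therefore `N ^ a ∣ Res(P, P')`, and by
coprimality `∏ Nᵢ ^ aᵢ ∣ Res(P, P')`, while expanding the determinant gives
`|Res(P, P')| ≤ (2d)! H ^ (2d)`.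
-/

open Polynomial Matrix
open scoped Nat

section Determinant

variable {R : Type*} [CommRing R] {n : Type*} [Fintype n] [DecidableEq n]

theorem det_mem_prod_of_forall_row_mem {M : Matrix n n R} {J : n → Ideal R}
    (hM : ∀ i j, M i j ∈ J i) : M.det ∈ ∏ i, J i := by
  rw [det_apply']
  refine Ideal.sum_mem _ fun σ _ ↦ Ideal.mul_mem_left _ _ ?_
  rw [← Equiv.prod_comp σ J]
  exact Ideal.prod_mem_prod fun i _ ↦ hM (σ i) i

end Determinant

section Division

variable {R : Type*} [CommRing R] {A p : R[X]} {b : ℕ}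

theorem modByMonic_mem_degreeLT (hA : A.Monic) : p %ₘ A ∈ degreeLT R A.natDegree := by
  nontriviality R
  rw [mem_degreeLT, ← degree_eq_natDegree hA.ne_zero]
  exact degree_modByMonic_lt p hA

theorem divByMonic_mem_degreeLT (hA : A.Monic) (hp : p ∈ degreeLT R (A.natDegree + b)) :
    p /ₘ A ∈ degreeLT R b := by
  nontriviality R
  rw [mem_degreeLT] at hp ⊢
  rcases lt_or_ge p.degree A.degree with hlt | hge
  · simp [(divByMonic_eq_zero_iff hA).2 hlt]
  · rw [← degree_add_divByMonic hA hge, degree_eq_natDegree hA.ne_zero, Nat.cast_add] at hp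
    exact lt_of_add_lt_add_left hp

-- The columns of `sylvester A 1` are the polynomials `1, X, …, A, A X, …`.
theorem sylvester_one_mulVec_modByMonic_divByMonic (hA : A.Monic)
    (hp : p ∈ degreeLT R (A.natDegree + b)) :
    sylvester A 1 A.natDegree b *ᵥ
        Fin.append (fun i ↦ (p %ₘ A).coeff i) (fun i ↦ (p /ₘ A).coeff i) =
      fun i : Fin (A.natDegree + b) ↦ p.coeff i := by
  let remQuo : degreeLT R A.natDegree × degreeLT R b :=
    (⟨p %ₘ A, modByMonic_mem_degreeLT hA⟩, ⟨p /ₘ A, divByMonic_mem_degreeLT hA hp⟩)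
  have hmap : sylvesterMap A 1 le_rfl (by simp) remQuo = ⟨p, hp⟩ := by
    ext1
    simp [remQuo, add_comm (A * _), modByMonic_add_div]
  have hrepr : ⇑((((degreeLT.basis R _).prod (degreeLT.basis R b)).reindex
        finSumFinEquiv).repr remQuo) =
      Fin.append (fun i ↦ (p %ₘ A).coeff i) (fun i ↦ (p /ₘ A).coeff i) := by
    ext k
    induction k using Fin.addCases <;> simp [remQuo]
  rw [← toMatrix_sylvesterMap' A 1 le_rfl (by simp), ← hrepr, LinearMap.toMatrix_mulVec_repr, hmap]
  ext i
  simp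

end Division

section CommonDivisor

variable {R S : Type*} [CommRing R] [CommRing S] {f : R →+* S} {A : R[X]}

theorem coeff_modByMonic_mem_ker {p : R[X]} (hA : A.Monic) (hp : A.map f ∣ p.map f) (k : ℕ) :
    (p %ₘ A).coeff k ∈ RingHom.ker f := by
  rw [RingHom.mem_ker, ← coeff_map, map_modByMonic f hA,
    (modByMonic_eq_zero_iff_dvd (hA.map f)).2 hp, coeff_zero]

theorem det_coeff_mem_ker_pow_natDegree {n : ℕ} {c : Fin n → R[X]} (hA : A.Monic)
    (hAn : A.natDegree ≤ n) (hc : ∀ j, c j ∈ degreeLT R n) (hdvd : ∀ j, A.map f ∣ (c j).map f) :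
    (Matrix.of fun i j : Fin n ↦ (c j).coeff i).det ∈ RingHom.ker f ^ A.natDegree := by
  obtain ⟨b, rfl⟩ := Nat.exists_eq_add_of_le hAn
  let coords : Matrix (Fin (A.natDegree + b)) (Fin (A.natDegree + b)) R := Matrix.of fun k j ↦
    Fin.append (fun i ↦ (c j %ₘ A).coeff i) (fun i ↦ (c j /ₘ A).coeff i) k
  have hfactor : (Matrix.of fun i j : Fin (A.natDegree + b) ↦ (c j).coeff i) =
      sylvester A 1 A.natDegree b * coords := by
    ext i j
    exact (congrFun (sylvester_one_mulVec_modByMonic_divByMonic hA (hc j)) i).symm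
  have hcoords : coords.det ∈ ∏ k, Fin.append (fun _ : Fin A.natDegree ↦ RingHom.ker f)
      (fun _ : Fin b ↦ (⊤ : Ideal R)) k := by
    refine det_mem_prod_of_forall_row_mem fun k j ↦ ?_
    induction k using Fin.addCases with
    | left i => simpa [coords] using coeff_modByMonic_mem_ker hA (hdvd j) i
    | right i => simp
  rw [hfactor, det_mul]
  refine Ideal.mul_mem_left _ _ ?_
  simpa [Fin.prod_univ_add, Ideal.top_pow] using hcoords

variable {P Q : R[X]} {m n : ℕ}

theorem sylvester_apply_eq_coeff_sylvesterMap (hP : P.natDegree ≤ m) (hQ : Q.natDegree ≤ n)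
    (i j : Fin (m + n)) :
    sylvester P Q m n i j =
      (sylvesterMap P Q hP hQ (degreeLT.basisProd R m n j) : R[X]).coeff i := by
  rw [← toMatrix_sylvesterMap' P Q hP hQ, LinearMap.toMatrix_apply, degreeLT.basis_repr,
    degreeLT.basisProd]

theorem resultant_mem_ker_pow_natDegree (hA : A.Monic) (hAmn : A.natDegree ≤ m + n)
    (hP : P.natDegree ≤ m) (hQ : Q.natDegree ≤ n)
    (hPA : A.map f ∣ P.map f) (hQA : A.map f ∣ Q.map f) :
    resultant P Q m n ∈ RingHom.ker f ^ A.natDegree := by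
  have hcol : sylvester P Q m n = Matrix.of fun i j : Fin (m + n) ↦
      (sylvesterMap P Q hP hQ (degreeLT.basisProd R m n j) : R[X]).coeff i :=
    Matrix.ext (sylvester_apply_eq_coeff_sylvesterMap hP hQ)
  rw [resultant, hcol]
  refine det_coeff_mem_ker_pow_natDegree hA hAmn (fun j ↦ Subtype.property _) fun j ↦ ?_
  rw [sylvesterMap_apply_coe, Polynomial.map_add, Polynomial.map_mul, Polynomial.map_mul]
  exact dvd_add (hPA.mul_right _) (hQA.mul_right _)

end CommonDivisor

section Height

variable {R S : Type*} [CommRing R] [Nontrivial R] [CommRing S] [LinearOrder S]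
  [IsStrictOrderedRing S]

theorem abv_resultant_le {abv : AbsoluteValue R S} {P Q : R[X]} {H : S}
    (hP : ∀ k, abv (P.coeff k) ≤ H) (hQ : ∀ k, abv (Q.coeff k) ≤ H) (m n : ℕ) :
    abv (resultant P Q m n) ≤ (m + n)! * H ^ (m + n) := by
  have hH : 0 ≤ H := (abv.nonneg _).trans (hP 0)
  have hentry : ∀ i j, abv (sylvester P Q m n i j) ≤ H := by
    intro i j
    induction j using Fin.addCases with
    | left l =>
      rw [sylvester, Matrix.of_apply, Fin.addCases_left]
      split_ifs
      exacts [hQ _, by rwa [map_zero]]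
    | right l =>
      rw [sylvester, Matrix.of_apply, Fin.addCases_right]
      split_ifs
      exacts [hP _, by rwa [map_zero]]
  simpa [resultant] using det_le hentry

end Height

section Irreducible

theorem associated_of_resultant_eq_zero {R : Type*} [CommRing R] [IsDomain R] [IsGCDMonoid R]
    {P Q : R[X]} (hP : Irreducible P) (hQ : Irreducible Q) (hres : resultant P Q = 0) :
    Associated P Q := by
  let toFrac := algebraMap R (FractionRing R)
  have hinj : Function.Injective toFrac := IsFractionRing.injective R (FractionRing R)
  have hres_frac : resultant (P.map toFrac) (Q.map toFrac) = 0 := by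
    rw [natDegree_map_eq_of_injective hinj, natDegree_map_eq_of_injective hinj,
      resultant_map_map, hres, map_zero]
  have hnot_coprime : ¬ IsCoprime (P.map toFrac) (Q.map toFrac) :=
    (resultant_eq_zero_iff.1 hres_frac).2
  have hPdeg : P.natDegree ≠ 0 := by
    intro hconst
    obtain ⟨r, rfl⟩ := natDegree_eq_zero.1 hconst
    have hr : r ≠ 0 := C_ne_zero.1 hP.ne_zero
    simp [hr] at hres
  have hPprim : P.IsPrimitive := hP.isPrimitive hPdeg
  have hP_frac : Irreducible (P.map toFrac) :=
    hPprim.irreducible_iff_irreducible_map_fraction_map.1 hP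
  have hdvd_frac : P.map toFrac ∣ Q.map toFrac := by
    rwa [hP_frac.coprime_iff_not_dvd, not_not] at hnot_coprime
  exact hP.associated_of_dvd hQ (hPprim.dvd_of_fraction_map_dvd_fraction_map hdvd_frac)

theorem eq_or_eq_neg_of_associated_int {P Q : ℤ[X]} (h : Associated P Q) : Q = P ∨ Q = -P := by
  obtain ⟨u, rfl⟩ := h
  obtain ⟨r, hr, hu⟩ := Polynomial.isUnit_iff.1 u.isUnit
  rcases Int.isUnit_iff.1 hr with rfl | rfl <;> simp [← hu]

end Irreducible

section Interpolation

theorem factorial_mul_pow_le_interpolation_bound (d : ℕ) {H : ℝ} (hH : 1 ≤ H) :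
    ((2 * d)! : ℝ) * H ^ (2 * d) ≤ ((2 * d)! : ℝ) ^ (d + 1) * H ^ (d * (d + 1)) *
      (2 : ℝ) ^ (((d ^ 2 * (d + 1) : ℕ) : ℝ) / 4) := by
  have hfactorial : ((2 * d)! : ℝ) ≤ ((2 * d)! : ℝ) ^ (d + 1) :=
    le_self_pow₀ (mod_cast (2 * d).factorial_pos) d.succ_ne_zero
  have hpow : H ^ (2 * d) ≤ H ^ (d * (d + 1)) :=
    pow_le_pow_right₀ hH (by nlinarith [Nat.le_mul_self d])
  have htwo : (1 : ℝ) ≤ 2 ^ (((d ^ 2 * (d + 1) : ℕ) : ℝ) / 4) :=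
    Real.one_le_rpow one_le_two (by positivity)
  calc ((2 * d)! : ℝ) * H ^ (2 * d) ≤ ((2 * d)! : ℝ) ^ (d + 1) * H ^ (d * (d + 1)) := by gcongr
    _ ≤ _ := le_mul_of_one_le_right (by positivity) htwo

variable {P Q : ℤ[X]}

theorem abs_intCast_resultant_le {H : ℝ} (hP : ∀ k, |(P.coeff k : ℝ)| ≤ H)
    (hQ : ∀ k, |(Q.coeff k : ℝ)| ≤ H) (m n : ℕ) :
    |((resultant P Q m n : ℤ) : ℝ)| ≤ (m + n)! * H ^ (m + n) :=
  abv_resultant_le (abv := AbsoluteValue.abs.comp (RingHom.injective_int (Int.castRingHom ℝ)))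
    hP hQ m n

variable {m n : ℕ}

theorem pow_natDegree_dvd_resultant {N : ℕ} {A : ℤ[X]} (hA : A.Monic) (hAmn : A.natDegree ≤ m + n)
    (hP : P.natDegree ≤ m) (hQ : Q.natDegree ≤ n)
    (hPA : A.map (Int.castRingHom (ZMod N)) ∣ P.map (Int.castRingHom (ZMod N)))
    (hQA : A.map (Int.castRingHom (ZMod N)) ∣ Q.map (Int.castRingHom (ZMod N))) :
    (N : ℤ) ^ A.natDegree ∣ resultant P Q m n := by
  rw [← Ideal.mem_span_singleton, ← Ideal.span_singleton_pow, ← ZMod.ker_intCastRingHom]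
  exact resultant_mem_ker_pow_natDegree hA hAmn hP hQ hPA hQA

variable {ι : Type*} [Fintype ι] {N : ι → ℕ} {A : ι → ℤ[X]}

theorem prod_pow_natDegree_dvd_resultant (hN : Pairwise fun i j ↦ (N i).Coprime (N j))
    (hA : ∀ i, (A i).Monic) (hAmn : ∀ i, (A i).natDegree ≤ m + n)
    (hP : P.natDegree ≤ m) (hQ : Q.natDegree ≤ n)
    (hPA : ∀ i, (A i).map (Int.castRingHom (ZMod (N i))) ∣ P.map (Int.castRingHom (ZMod (N i))))
    (hQA : ∀ i, (A i).map (Int.castRingHom (ZMod (N i))) ∣ Q.map (Int.castRingHom (ZMod (N i)))) :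
    ∏ i, (N i : ℤ) ^ (A i).natDegree ∣ resultant P Q m n :=
  Fintype.prod_dvd_of_coprime (fun _ _ hij ↦ (Nat.isCoprime_iff_coprime.2 (hN hij)).pow)
    fun i ↦ pow_natDegree_dvd_resultant (hA i) (hAmn i) hP hQ (hPA i) (hQA i)

theorem stmt_13_general (hN : Pairwise fun i j ↦ (N i).Coprime (N j)) (hA : ∀ i, (A i).Monic)
    (hAdeg : ∀ i, (A i).natDegree ≤ P.natDegree + Q.natDegree)
    {H : ℝ} (hP : Irreducible P) (hPH : ∀ k, |(P.coeff k : ℝ)| ≤ H)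
    (hQ : Irreducible Q) (hQH : ∀ k, |(Q.coeff k : ℝ)| ≤ H)
    (hPA : ∀ i, (A i).map (Int.castRingHom (ZMod (N i))) ∣ P.map (Int.castRingHom (ZMod (N i))))
    (hQA : ∀ i, (A i).map (Int.castRingHom (ZMod (N i))) ∣ Q.map (Int.castRingHom (ZMod (N i))))
    (hbig : ((P.natDegree + Q.natDegree)! : ℝ) * H ^ (P.natDegree + Q.natDegree) <
      ∏ i, (N i : ℝ) ^ (A i).natDegree) :
    Q = P ∨ Q = -P := by
  refine eq_or_eq_neg_of_associated_int (associated_of_resultant_eq_zero hP hQ ?_)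
  refine Int.eq_zero_of_abs_lt_dvd
    (prod_pow_natDegree_dvd_resultant hN hA hAdeg le_rfl le_rfl hPA hQA) ?_
  exact_mod_cast (abs_intCast_resultant_le hPH hQH _ _).trans_lt hbig

end Interpolation

/-- **Interpolation and lattices (uniqueness).**  Let `N₁, …, N_I` be pairwise coprime
integers `≥ 2` and `Aᵢ ∈ ℤ[X]` monic of degree `aᵢ`, `1 ≤ aᵢ ≤ d`.  Suppose `P` and `P'`
are irreducible integer polynomials of degree `d ≥ 2` and naive height `≤ H` such that for
every `i`, both `P mod Nᵢ` and `P' mod Nᵢ` are multiples of `Aᵢ mod Nᵢ`.  If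
`∏ Nᵢ^{aᵢ} > (2d)!^{d+1}·H^{d(d+1)}·2^{d²(d+1)/4}`, then `P' = P` or `P' = −P`. -/
theorem stmt_13 (d : ℕ) (hd : 2 ≤ d) (I : ℕ) (hI : 1 ≤ I)
    (N : Fin I → ℕ) (hN : ∀ i, 2 ≤ N i)
    (hcop : ∀ i j : Fin I, i ≠ j → Nat.Coprime (N i) (N j))
    (A : Fin I → Polynomial ℤ) (a : Fin I → ℕ)
    (hAmonic : ∀ i, (A i).Monic) (hAdeg : ∀ i, (A i).natDegree = a i)
    (ha1 : ∀ i, 1 ≤ a i) (had : ∀ i, a i ≤ d)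
    (H : ℝ) (hH : 1 ≤ H)
    (P P' : Polynomial ℤ)
    (hP : Irreducible P) (hPdeg : P.natDegree = d)
    (hPH : ∀ n : ℕ, |(P.coeff n : ℝ)| ≤ H)
    (hP' : Irreducible P') (hP'deg : P'.natDegree = d)
    (hP'H : ∀ n : ℕ, |(P'.coeff n : ℝ)| ≤ H)
    (hPA : ∀ i, (A i).map (Int.castRingHom (ZMod (N i))) ∣
        P.map (Int.castRingHom (ZMod (N i))))
    (hP'A : ∀ i, (A i).map (Int.castRingHom (ZMod (N i))) ∣
        P'.map (Int.castRingHom (ZMod (N i))))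
    (hbig : (Nat.factorial (2 * d) : ℝ) ^ (d + 1) * H ^ (d * (d + 1)) *
        (2 : ℝ) ^ (((d ^ 2 * (d + 1) : ℕ) : ℝ) / 4) < ∏ i, (N i : ℝ) ^ (a i)) :
    P' = P ∨ P' = -P := by
  obtain rfl : a = fun i ↦ (A i).natDegree := funext fun i ↦ (hAdeg i).symm
  have hsum : P.natDegree + P'.natDegree = 2 * d := by rw [hPdeg, hP'deg, two_mul]
  refine stmt_13_general hcop hAmonic (fun i ↦ (had i).trans (by omega)) hP hPH hP' hP'H hPA hP'A ?_
  rw [hsum]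
  exact (factorial_mul_pow_le_interpolation_bound d hH).trans_lt hbig
end

section
/- Let τ be an integer-valued function on the prime numbers satisfying the Deligne bound τ(p)² < 4p^{11} for every prime p, and call a pair of primes (ℓ, p) bad if ℓ divides τ(p)² − 4p^{11}. Let β > 0 be a real constant with p_k ≤ β·k·log k for every integer k ≥ 2 (p_k the k-th prime). Then for every real c > 1 and every integer X with X ≥ 3 and X ≥ β, the number of bad pairs (ℓ, p) with ℓ a prime ≤ p_X and p a prime ≤ ℓ^c is at most 51·c·β^c·X^c·(log X)^{c+1}. -/
/-- A pair of primes `(ℓ, p)` is *bad* (for the function `τ`) if `ℓ` divides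
`τ(p)² − 4p¹¹`. -/
def BadPair (τ : ℕ → ℤ) (ℓ p : ℕ) : Prop :=
  (ℓ : ℤ) ∣ τ p ^ 2 - 4 * (p : ℤ) ^ 11

/-!
Each integer `τ(p)² − 4p¹¹` is nonzero of absolute value at most `4p¹¹`, so it has at most
`log₂ (4p¹¹)` prime divisors, whatever range `ℓ` is taken from. The primes `p` that occur are at
most `y := (β X log X) ^ c`, so there are at most `y · log₂ (4y¹¹)` bad pairs. Since `β ≤ X`, we
have `y ≤ X ^ (3c)`, hence `log (4y¹¹) ≤ 2 log 2 + 33 c log X`; now `1 ≤ c log X` and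
`33 ≤ 49 log 2` give `log₂ (4y¹¹) ≤ (2 + 49) c log X`.
-/

theorem natCard_le_sum_card_of_forall_mem {α ι : Type*} {S : Set (α × ι)} {s : Finset ι}
    {t : ι → Finset α} (hS : ∀ x ∈ S, x.2 ∈ s ∧ x.1 ∈ t x.2) :
    Nat.card S ≤ ∑ i ∈ s, (t i).card := by
  classical
  let T : Finset (α × ι) := s.biUnion fun i => t i ×ˢ {i}
  have hST : S ⊆ T := by
    rintro ⟨a, i⟩ hai
    simpa [T, and_comm] using hS _ hai
  calc Nat.card S ≤ Nat.card (T : Set (α × ι)) := Nat.card_mono T.finite_toSet hST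
    _ = T.card := by simp
    _ ≤ ∑ i ∈ s, (t i ×ˢ {i}).card := Finset.card_biUnion_le
    _ = ∑ i ∈ s, (t i).card := by simp

theorem two_pow_card_primeFactors_le {n : ℕ} (hn : n ≠ 0) : 2 ^ n.primeFactors.card ≤ n :=
  calc 2 ^ n.primeFactors.card ≤ ∏ p ∈ n.primeFactors, p :=
        Finset.pow_card_le_prod _ _ _ fun _ hp => (Nat.prime_of_mem_primeFactors hp).two_le
    _ ≤ n := Nat.le_of_dvd (Nat.pos_of_ne_zero hn) (Nat.prod_primeFactors_dvd n)

theorem card_primeFactors_le_logb {n : ℕ} (hn : n ≠ 0) {y : ℝ} (hny : (n : ℝ) ≤ y) :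
    (n.primeFactors.card : ℝ) ≤ Real.logb 2 y := by
  have hpow : (2 : ℝ) ^ n.primeFactors.card ≤ n := mod_cast two_pow_card_primeFactors_le hn
  have hy : 0 < y := lt_of_lt_of_le (by positivity) hny
  rw [Real.le_logb_iff_rpow_le one_lt_two hy, Real.rpow_natCast]
  exact hpow.trans hny

theorem primeCounting_le_self (n : ℕ) : Nat.primeCounting n ≤ n := by
  rw [← Nat.primesLE_card_eq_primeCounting, Nat.primesLE_eq_filter_Icc_one]
  exact (Finset.card_filter_le _ _).trans (by simp)

theorem natCard_prime_dvd_le {ι : Type*} {S : Set (ℕ × ι)} {s : Finset ι} {f : ι → ℤ} {B : ℝ}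
    (hf₀ : ∀ i ∈ s, f i ≠ 0) (hfB : ∀ i ∈ s, |(f i : ℝ)| ≤ B)
    (hS : ∀ x ∈ S, x.1.Prime ∧ x.2 ∈ s ∧ (x.1 : ℤ) ∣ f x.2) :
    (Nat.card S : ℝ) ≤ s.card * Real.logb 2 B := by
  have hmem : ∀ x ∈ S, x.2 ∈ s ∧ x.1 ∈ (f x.2).natAbs.primeFactors := by
    intro x hx
    obtain ⟨hℓ, hi, hdvd⟩ := hS x hx
    exact ⟨hi, Nat.mem_primeFactors.2
      ⟨hℓ, Int.natCast_dvd.1 hdvd, Int.natAbs_ne_zero.2 (hf₀ _ hi)⟩⟩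
  have hcard : ∀ i ∈ s, ((f i).natAbs.primeFactors.card : ℝ) ≤ Real.logb 2 B := fun i hi =>
    card_primeFactors_le_logb (Int.natAbs_ne_zero.2 (hf₀ i hi))
      (by simpa only [Nat.cast_natAbs, Int.cast_abs] using hfB i hi)
  calc (Nat.card S : ℝ) ≤ ∑ i ∈ s, ((f i).natAbs.primeFactors.card : ℝ) := by
        exact_mod_cast natCard_le_sum_card_of_forall_mem hmem
    _ ≤ s.card * Real.logb 2 B := by
        simpa only [nsmul_eq_mul] using Finset.sum_le_card_nsmul s _ _ hcard

theorem natCard_badPair_le {τ : ℕ → ℤ}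
    (hτ : ∀ p : ℕ, p.Prime → τ p ^ 2 < 4 * (p : ℤ) ^ 11) {S : Set (ℕ × ℕ)} {y : ℝ}
    (hS : ∀ x ∈ S, x.1.Prime ∧ x.2.Prime ∧ (x.2 : ℝ) ≤ y ∧ BadPair τ x.1 x.2) :
    (Nat.card S : ℝ) ≤ Nat.primeCounting ⌊y⌋₊ * Real.logb 2 (4 * y ^ 11) := by
  rw [← Nat.primesLE_card_eq_primeCounting]
  refine natCard_prime_dvd_le (f := fun p => τ p ^ 2 - 4 * (p : ℤ) ^ 11) ?ne_zero ?abs_le ?dvd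
  case ne_zero =>
    exact fun p hp => (sub_neg.2 (hτ p (Nat.prime_of_mem_primesLE hp))).ne
  case abs_le =>
    intro p hp
    obtain ⟨hp_floor, hp_prime⟩ := Nat.mem_primesLE.1 hp
    have hpy : (p : ℝ) ≤ y := (Nat.le_floor_iff' hp_prime.ne_zero).1 hp_floor
    have hlt : (τ p : ℝ) ^ 2 < 4 * (p : ℝ) ^ 11 := mod_cast hτ p hp_prime
    have hle : 4 * (p : ℝ) ^ 11 ≤ 4 * y ^ 11 := by gcongr
    push_cast
    rw [abs_of_neg (sub_neg.2 hlt)]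
    linarith [sq_nonneg (τ p : ℝ)]
  case dvd =>
    intro x hx
    obtain ⟨hℓ, hp, hpy, hbad⟩ := hS x hx
    exact ⟨hℓ, Nat.mem_primesLE.2 ⟨Nat.le_floor hpy, hp⟩, hbad⟩

theorem logb_two_four_mul_pow_le {y t : ℝ} (hy : 0 < y) (ht : 1 ≤ t)
    (hyt : Real.log y ≤ 3 * t) : Real.logb 2 (4 * y ^ 11) ≤ 51 * t := by
  have hlog : Real.log (4 * y ^ 11) = 2 * Real.log 2 + 11 * Real.log y := by
    rw [show (4 : ℝ) = 2 ^ 2 by norm_num, Real.log_mul (by positivity) (by positivity),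
      Real.log_pow, Real.log_pow]
    norm_num
  have hlog2 : 33 ≤ 49 * Real.log 2 := by linarith [Real.log_two_gt_d9]
  rw [Real.logb, div_le_iff₀ (Real.log_pos one_lt_two)]
  calc Real.log (4 * y ^ 11) ≤ 2 * Real.log 2 + 33 * t := by linarith
    _ ≤ 2 * Real.log 2 * t + 49 * Real.log 2 * t :=
        add_le_add (le_mul_of_one_le_right (by positivity) ht) (by gcongr)
    _ = 51 * t * Real.log 2 := by ring

theorem one_le_log_of_three_le {x : ℝ} (hx : 3 ≤ x) : 1 ≤ Real.log x := by
  rw [Real.le_log_iff_exp_le (by linarith)]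
  exact Real.exp_one_lt_three.le.trans hx

theorem mul_mul_log_le_cube {β x : ℝ} (hβ : 0 ≤ β) (hβx : β ≤ x) :
    β * x * Real.log x ≤ x ^ 3 := by
  have hx : 0 ≤ x := hβ.trans hβx
  calc β * x * Real.log x ≤ β * x * x := by gcongr; exact Real.log_le_self hx
    _ ≤ x * x * x := by gcongr
    _ = x ^ 3 := by ring

theorem stmt_16_general {τ : ℕ → ℤ} (hτ : ∀ p : ℕ, p.Prime → τ p ^ 2 < 4 * (p : ℤ) ^ 11)
    {β x c : ℝ} {N : ℕ} (hβ : 0 < β) (hβx : β ≤ x) (hc : 0 < c) (hcx : 1 ≤ c * Real.log x)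
    (hN : (N : ℝ) ≤ β * x * Real.log x) :
    (Nat.card {lp : ℕ × ℕ // lp.1.Prime ∧ lp.2.Prime ∧ lp.1 ≤ N ∧
        (lp.2 : ℝ) ≤ (lp.1 : ℝ) ^ c ∧ BadPair τ lp.1 lp.2} : ℝ)
      ≤ 51 * c * β ^ c * x ^ c * Real.log x ^ (c + 1) := by
  have hx : 0 < x := hβ.trans_le hβx
  have hlogx : 0 < Real.log x := pos_of_mul_pos_right (one_pos.trans_le hcx) hc.le
  set z : ℝ := β * x * Real.log x with hz
  have hz0 : 0 < z := by positivity
  have hlogz : Real.log (z ^ c) ≤ 3 * (c * Real.log x) := by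
    have hzx : Real.log z ≤ 3 * Real.log x := by
      simpa using Real.log_le_log hz0 (mul_mul_log_le_cube hβ.le hβx)
    rw [Real.log_rpow hz0]
    linarith [mul_le_mul_of_nonneg_left hzx hc.le]
  have hprimes : (Nat.primeCounting ⌊z ^ c⌋₊ : ℝ) ≤ z ^ c :=
    (Nat.cast_le.2 (primeCounting_le_self _)).trans (Nat.floor_le (by positivity))
  calc _ ≤ Nat.primeCounting ⌊z ^ c⌋₊ * Real.logb 2 (4 * (z ^ c) ^ 11) := by
        refine natCard_badPair_le hτ (S := Set.ofPred _) ?_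
        rintro ⟨ℓ, p⟩ ⟨hℓ, hp, hℓN, hpℓ, hbad⟩
        have hℓz : (ℓ : ℝ) ≤ z := (Nat.cast_le.2 hℓN).trans hN
        exact ⟨hℓ, hp, hpℓ.trans (by gcongr), hbad⟩
    _ ≤ z ^ c * (51 * (c * Real.log x)) :=
        mul_le_mul_of_nonneg hprimes
          (logb_two_four_mul_pow_le (by positivity) hcx hlogz) (by positivity) (by positivity)
    _ = 51 * c * β ^ c * x ^ c * Real.log x ^ (c + 1) := by
        rw [hz, Real.mul_rpow (by positivity) hlogx.le, Real.mul_rpow hβ.le hx.le,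
          Real.rpow_add_one hlogx.ne']
        ring

/-- **Counting bad pairs.**  Assume the Deligne bound `τ(p)² < 4p¹¹` and the Chebyshev
upper bound `p_k ≤ β·k·log k` for `k ≥ 2`.  Then for every real `c > 1` and integer `X`
with `X ≥ 3` and `X ≥ β`, the number of bad pairs `(ℓ, p)` with `ℓ ≤ p_X` prime and
`p ≤ ℓ^c` prime is at most `51·c·β^c·X^c·(log X)^{c+1}`. -/
theorem stmt_16 (τ : ℕ → ℤ) (hτ : ∀ p : ℕ, p.Prime → τ p ^ 2 < 4 * (p : ℤ) ^ 11)
    (β : ℝ) (hβ : 0 < β)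
    (hup : ∀ k : ℕ, 2 ≤ k →
      (Nat.nth Nat.Prime (k - 1) : ℝ) ≤ β * k * Real.log k)
    (c : ℝ) (hc : 1 < c) (X : ℕ) (hX3 : 3 ≤ X) (hXβ : β ≤ (X : ℝ)) :
    (Nat.card {lp : ℕ × ℕ // lp.1.Prime ∧ lp.2.Prime ∧
        lp.1 ≤ Nat.nth Nat.Prime (X - 1) ∧ (lp.2 : ℝ) ≤ (lp.1 : ℝ) ^ c ∧
        BadPair τ lp.1 lp.2} : ℝ)
      ≤ 51 * c * β ^ c * (X : ℝ) ^ c * Real.log X ^ (c + 1) := by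
  have hlogX : 1 ≤ Real.log X := one_le_log_of_three_le (mod_cast hX3)
  exact stmt_16_general hτ hβ hXβ (one_pos.trans hc) (one_le_mul_of_one_le_of_one_le hc.le hlogX)
    (hup X (by lia))
end
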